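/- arXiv:1311.3354 — 2 statements merged into one kernel-verified Lean document; each statement's English description precedes it below -/
import Mathlib

section
/- Let t ∈ ℂ be any root of t³ − 21t + 37 = 0. Then 2t² + 5t − 30 ≠ 0 and 26220t² + 67488t − 376912 ≠ 0. Moreover, for any s ∈ ℂ with s^{18} = 26220t² + 67488t − 376912 (so s ≠ 0), let d¹ be the 2×2 matrix over R = ℂ[u,v,x,y] with entries a = v − ((t² − 10t + 19)/2)·(s·u)⁹ + (t − 2)·y·(s·u)⁵ + y²·(s·u), b = −x + (2t − 5)·(s·u)⁶ + y·(s·u)², c = x² + y³ + (2t − 5)²·(s·u)^{12} + (2t − 5)·x·(s·u)⁶ + 2(2t − 5)·y·(s·u)⁸ + x·y·(s·u)² + y²·(s·u)⁴, d = −v − ((t² − 10t + 19)/2)·(s·u)⁹ + (t − 2)·y·(s·u)⁵ + y²·(s·u); let d⁰ = adjugate(d¹), d = [[0, d¹], [d⁰, 0]], and S = str(∂_u d · ∂_v d · ∂_x d · ∂_y d) ∈ R. Then for all natural numbers c', e', the coefficient of the monomial u^{16} v⁰ x^{c'} y^{e'} in S equals −36(2t² + 5t − 30)/s if c' = e' =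 0 and 0 otherwise. Equivalently, the right quantum dimension of this matrix factorisation of x³ + x·y³ − u^{18} − v² equals (2t² + 5t − 30)/s, which is non-zero. -/
/-!
For the weights `|u| = 1`, `|v| = 9`, `|x| = 6`, `|y| = 4` the potential `x³ + x y³ - u¹⁸ - v²` has
degree `18`, and `d` becomes a homogeneous matrix of degree `9` once the basis vectors of each
summand are given the degrees `0` and `3`. The supertrace `S` of the four derivatives is therefore
homogeneous of degree `4 · 9 - (1 + 9 + 6 + 4) = 16`. So among the monomials `u¹⁶ x^c y^e` only
`u¹⁶` can occur, and since no other power of `u` occurs in `S`, its coefficient is the value of `S`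
at the point `u = 1`, `v = x = y = 0`, which is a computation with four complex `2 × 2` matrices. It
gives `9 s¹⁷ (2t - 5) (11t² - 66t + 97)`, and multiplication by `s` leaves an identity modulo
`t³ - 21t + 37`.
-/

open MvPolynomial

noncomputable section

/-- The polynomial ring `R = ℂ[u,v,x,y]`. -/
abbrev R4 : Type := MvPolynomial (Fin 4) ℂ

def u : R4 := X 0
def v : R4 := X 1
def x : R4 := X 2
def y : R4 := X 3

/-- The exponent vector of the monomial `u^a v^b x^c y^e`. -/
def mon (a b c e : ℕ) : Fin 4 →₀ ℕ :=
  Finsupp.single 0 a + Finsupp.single 1 b + Finsupp.single 2 c + Finsupp.single 3 e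

/-- Entrywise partial derivative of a matrix of polynomials. -/
def pd {m n : Type} (i : Fin 4) (M : Matrix m n R4) : Matrix m n R4 :=
  M.map fun p => pderiv i p

/-- The supertrace of a `2r × 2r` block matrix. -/
def str {r : ℕ} (M : Matrix (Fin r ⊕ Fin r) (Fin r ⊕ Fin r) R4) : R4 :=
  Matrix.trace M.toBlocks₁₁ - Matrix.trace M.toBlocks₂₂

/-- The matrix `d¹` of the E₇ orbifold equivalence. -/
def dE7 (s t : ℂ) : Matrix (Fin 2) (Fin 2) R4 :=
  !![v - C ((t^2 - 10*t + 19)/2) * (C s * u) ^ 9 + C (t - 2) * y * (C s * u) ^ 5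
       + y ^ 2 * (C s * u),
     -x + C (2*t - 5) * (C s * u) ^ 6 + y * (C s * u) ^ 2;
     x ^ 2 + y ^ 3 + C ((2*t - 5)^2) * (C s * u) ^ 12 + C (2*t - 5) * x * (C s * u) ^ 6
       + C (2*(2*t - 5)) * y * (C s * u) ^ 8 + x * y * (C s * u) ^ 2 + y ^ 2 * (C s * u) ^ 4,
     -v - C ((t^2 - 10*t + 19)/2) * (C s * u) ^ 9 + C (t - 2) * y * (C s * u) ^ 5
       + y ^ 2 * (C s * u)]

/-- The twisted differential `d = [[0, d¹], [d⁰, 0]]` with `d⁰` the adjugate of `d¹`. -/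
def DE7 (s t : ℂ) : Matrix (Fin 2 ⊕ Fin 2) (Fin 2 ⊕ Fin 2) R4 :=
  Matrix.fromBlocks 0 (dE7 s t) (dE7 s t).adjugate 0

/-- The supertrace `S = str(∂_u d · ∂_v d · ∂_x d · ∂_y d)`. -/
def SE7 (s t : ℂ) : R4 :=
  str (pd 0 (DE7 s t) * pd 1 (DE7 s t) * pd 2 (DE7 s t) * pd 3 (DE7 s t))

lemma coeff_single_eq_eval_of_isWeightedHomogeneous {R σ M : Type*} [CommSemiring R]
    [AddCommMonoid M] [DecidableEq σ] {w : σ → M} {φ : MvPolynomial σ R} {i : σ} {n : ℕ}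
    (hi : Function.Injective fun k : ℕ => k • w i) (hφ : IsWeightedHomogeneous w φ (n • w i)) :
    coeff (Finsupp.single i n) φ = eval (Pi.single i 1) φ := by
  have term_eq_zero (d : σ →₀ ℕ) (hd : d ∈ φ.support) (hne : d ≠ Finsupp.single i n) :
      coeff d φ * ∏ j ∈ d.support, (Pi.single i 1 : σ → R) j ^ d j = 0 := by
    obtain ⟨j, hj, hji⟩ : ∃ j ∈ d.support, j ≠ i := by
      by_contra! h
      obtain ⟨k, rfl⟩ := Finsupp.support_subset_singleton'.mp fun j hj =>
        Finset.mem_singleton.mpr (h j hj)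
      have hk : k • w i = n • w i := by
        simpa only [Finsupp.weight_single] using hφ (mem_support_iff.mp hd)
      exact hne (congrArg _ (hi hk))
    rw [Finset.prod_eq_zero hj, mul_zero]
    rw [Pi.single_eq_of_ne hji, zero_pow (Finsupp.mem_support_iff.mp hj)]
  rw [eval_eq, Finset.sum_eq_single (Finsupp.single i n) term_eq_zero]
  · rw [Finset.prod_eq_one, mul_one]
    intro j hj
    rw [Finset.mem_singleton.mp (Finsupp.support_single_subset hj), Pi.single_eq_same, one_pow]
  · intro h
    rw [notMem_support_iff.mp h, zero_mul]

section HomogeneousMatrix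

variable {R σ ι κ τ M : Type*} [CommSemiring R] [AddCommGroup M] {w : σ → M}

/-- A matrix of polynomials, regarded as a map of free modules whose basis vectors carry the degrees
`h` in the source and `g` in the target, is homogeneous of degree `n`. The degrees live in a group
to give a meaning to entries of negative degree, which then have to vanish for positive weights. -/
def IsHomogeneousMatrix (w : σ → M) (g : ι → M) (h : κ → M) (n : M)
    (A : Matrix ι κ (MvPolynomial σ R)) : Prop :=
  ∀ i j, IsWeightedHomogeneous w (A i j) (n + g i - h j)

namespace IsHomogeneousMatrix

variable {g : ι → M} {h : κ → M} {k : τ → M} {n m : M}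

protected lemma mul [Fintype κ] {A : Matrix ι κ (MvPolynomial σ R)}
    {B : Matrix κ τ (MvPolynomial σ R)}
    (hA : IsHomogeneousMatrix w g h n A) (hB : IsHomogeneousMatrix w h k m B) :
    IsHomogeneousMatrix w g k (n + m) (A * B) := by
  intro i j
  refine IsWeightedHomogeneous.sum _ _ _ fun l _ => ?_
  have hdeg : n + g i - h l + (m + h l - k j) = n + m + g i - k j := by abel
  exact hdeg ▸ (hA i l).mul (hB l j)

lemma fromBlocks_zero {A : Matrix ι κ (MvPolynomial σ R)} {B : Matrix κ ι (MvPolynomial σ R)}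
    (hA : IsHomogeneousMatrix w g h n A) (hB : IsHomogeneousMatrix w h g n B) :
    IsHomogeneousMatrix w (Sum.elim g h) (Sum.elim g h) n (Matrix.fromBlocks 0 A B 0) := by
  rintro (i | i) (j | j)
  · exact isWeightedHomogeneous_zero _ _ _
  · exact hA i j
  · exact hB i j
  · exact isWeightedHomogeneous_zero _ _ _

lemma adjugate_fin_two {R : Type*} [CommRing R] {g h : Fin 2 → M}
    {A : Matrix (Fin 2) (Fin 2) (MvPolynomial σ R)}
    (hA : IsHomogeneousMatrix w g h n A) :
    IsHomogeneousMatrix w h g (n + (g 0 + g 1) - (h 0 + h 1)) A.adjugate := by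
  rw [Matrix.adjugate_fin_two]
  intro i j
  fin_cases i <;> fin_cases j
  · exact (by abel : n + g 1 - h 1 = n + (g 0 + g 1) - (h 0 + h 1) + h 0 - g 0) ▸ hA 1 1
  · exact (by abel : n + g 0 - h 1 = n + (g 0 + g 1) - (h 0 + h 1) + h 0 - g 1) ▸ (hA 0 1).neg
  · exact (by abel : n + g 1 - h 0 = n + (g 0 + g 1) - (h 0 + h 1) + h 1 - g 0) ▸ (hA 1 0).neg
  · exact (by abel : n + g 0 - h 0 = n + (g 0 + g 1) - (h 0 + h 1) + h 1 - g 1) ▸ hA 0 0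

lemma isWeightedHomogeneous_trace [Fintype ι] {A : Matrix ι ι (MvPolynomial σ R)}
    (hA : IsHomogeneousMatrix w g g n A) : IsWeightedHomogeneous w A.trace n :=
  IsWeightedHomogeneous.sum _ _ _ fun i _ => add_sub_cancel_right n (g i) ▸ hA i i

lemma isWeightedHomogeneous_str {r : ℕ} {w : Fin 4 → M} {g : Fin r ⊕ Fin r → M}
    {A : Matrix (Fin r ⊕ Fin r) (Fin r ⊕ Fin r) R4} (hA : IsHomogeneousMatrix w g g n A) :
    IsWeightedHomogeneous w (str A) n :=
  (isWeightedHomogeneous_trace (g := g ∘ Sum.inl) fun i j => hA (.inl i) (.inl j)).sub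
    (isWeightedHomogeneous_trace (g := g ∘ Sum.inr) fun i j => hA (.inr i) (.inr j))

protected lemma pd {ι κ : Type} {w : Fin 4 → M} {g : ι → M} {h : κ → M} {A : Matrix ι κ R4}
    (hA : IsHomogeneousMatrix w g h n A) (i : Fin 4) :
    IsHomogeneousMatrix w g h (n - w i) (pd i A) :=
  fun a b => (hA a b).pderiv (by abel)

end IsHomogeneousMatrix

end HomogeneousMatrix

lemma str_mul_fromBlocks_zero {r : ℕ} (A₁ A₂ A₃ A₄ B₁ B₂ B₃ B₄ : Matrix (Fin r) (Fin r) R4) :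
    str (Matrix.fromBlocks 0 A₁ B₁ 0 * Matrix.fromBlocks 0 A₂ B₂ 0 *
        Matrix.fromBlocks 0 A₃ B₃ 0 * Matrix.fromBlocks 0 A₄ B₄ 0) =
      (A₁ * B₂ * A₃ * B₄).trace - (B₁ * A₂ * B₃ * A₄).trace := by
  simp [str, Matrix.fromBlocks_multiply]

lemma pd_fromBlocks_zero {m n : Type} (i : Fin 4) (A : Matrix m n R4) (B : Matrix n m R4) :
    pd i (Matrix.fromBlocks 0 A B 0) = Matrix.fromBlocks 0 (pd i A) (pd i B) 0 := by
  simp [pd, Matrix.fromBlocks_map, Matrix.map_zero]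

lemma pd_adjugate_fin_two (i : Fin 4) (A : Matrix (Fin 2) (Fin 2) R4) :
    pd i A.adjugate = (pd i A).adjugate := by
  ext a b
  fin_cases a <;> fin_cases b <;> simp [pd, Matrix.adjugate_fin_two]

lemma map_str_pd_mul_fromBlocks_adjugate {S : Type*} [CommRing S] (f : R4 →+* S)
    (A : Matrix (Fin 2) (Fin 2) R4) (i j k l : Fin 4) :
    f (str (pd i (Matrix.fromBlocks 0 A A.adjugate 0) * pd j (Matrix.fromBlocks 0 A A.adjugate 0) *
        pd k (Matrix.fromBlocks 0 A A.adjugate 0) * pd l (Matrix.fromBlocks 0 A A.adjugate 0))) =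
      ((pd i A).map f * ((pd j A).map f).adjugate *
        (pd k A).map f * ((pd l A).map f).adjugate).trace -
      (((pd i A).map f).adjugate * (pd j A).map f *
        ((pd k A).map f).adjugate * (pd l A).map f).trace := by
  have map_adjugate (B : Matrix (Fin 2) (Fin 2) R4) : B.adjugate.map f = (B.map f).adjugate :=
    f.map_adjugate B
  simp only [pd_fromBlocks_zero, pd_adjugate_fin_two, str_mul_fromBlocks_zero, map_sub,
    AddMonoidHom.map_trace, Matrix.map_mul, map_adjugate]

/-- The degrees of `u, v, x, y` for which `x³ + x y³ - u¹⁸ - v²` is homogeneous, of degree `18`. -/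
def weightE7 : Fin 4 → ℤ := ![1, 9, 6, 4]

lemma isHomogeneousMatrix_dE7 (s t : ℂ) :
    IsHomogeneousMatrix weightE7 ![0, 3] ![0, 3] 9 (dE7 s t) := by
  have hw : IsWeightedHomogeneous weightE7 (C s * u) 1 := (isWeightedHomogeneous_X ℂ _ 0).C_mul s
  have hv : IsWeightedHomogeneous weightE7 v 9 := isWeightedHomogeneous_X ℂ _ 1
  have hx : IsWeightedHomogeneous weightE7 x 6 := isWeightedHomogeneous_X ℂ _ 2
  have hy : IsWeightedHomogeneous weightE7 y 4 := isWeightedHomogeneous_X ℂ _ 3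
  intro i j
  fin_cases i <;> fin_cases j
  · exact ((hv.sub ((hw.pow 9).C_mul _)).add ((hy.C_mul _).mul (hw.pow 5))).add ((hy.pow 2).mul hw)
  · exact (hx.neg.add ((hw.pow 6).C_mul _)).add (hy.mul (hw.pow 2))
  · exact ((((((hx.pow 2).add (hy.pow 3)).add ((hw.pow 12).C_mul _)).add
      ((hx.C_mul _).mul (hw.pow 6))).add ((hy.C_mul _).mul (hw.pow 8))).add
      ((hx.mul hy).mul (hw.pow 2))).add ((hy.pow 2).mul (hw.pow 4))
  · exact ((hv.neg.sub ((hw.pow 9).C_mul _)).add ((hy.C_mul _).mul (hw.pow 5))).add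
      ((hy.pow 2).mul hw)

lemma isWeightedHomogeneous_SE7 (s t : ℂ) : IsWeightedHomogeneous weightE7 (SE7 s t) 16 := by
  have hA := isHomogeneousMatrix_dE7 s t
  have hD : IsHomogeneousMatrix weightE7 _ _ 9 (DE7 s t) := hA.fromBlocks_zero hA.adjugate_fin_two
  exact ((((hD.pd 0).mul (hD.pd 1)).mul (hD.pd 2)).mul (hD.pd 3)).isWeightedHomogeneous_str

lemma weight_weightE7_mon (a b c e : ℕ) :
    Finsupp.weight weightE7 (mon a b c e) = a + 9 * b + 6 * c + 4 * e := by
  simp [mon, weightE7, Finsupp.weight_single, mul_comm]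

lemma map_eval_pd_dE7 (s t : ℂ) (k : Fin 4) :
    (pd k (dE7 s t)).map (eval (Pi.single 0 1)) =
      ![!![-9 * ((t ^ 2 - 10 * t + 19) / 2) * s ^ 9, 6 * (2 * t - 5) * s ^ 6;
          12 * (2 * t - 5) ^ 2 * s ^ 12, -9 * ((t ^ 2 - 10 * t + 19) / 2) * s ^ 9],
        !![1, 0; 0, -1],
        !![0, -1; (2 * t - 5) * s ^ 6, 0],
        !![(t - 2) * s ^ 5, s ^ 2; 2 * (2 * t - 5) * s ^ 8, (t - 2) * s ^ 5]] k := by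
  ext i j
  fin_cases k <;> fin_cases i <;> fin_cases j <;>
    simp [pd, dE7, u, v, x, y, pderiv_X] <;> ring

lemma eval_SE7 (s t : ℂ) :
    eval (Pi.single 0 1) (SE7 s t) = 9 * s ^ 17 * (2 * t - 5) * (11 * t ^ 2 - 66 * t + 97) := by
  rw [SE7, DE7, map_str_pd_mul_fromBlocks_adjugate]
  simp only [map_eval_pd_dE7, Matrix.cons_val, Matrix.adjugate_fin_two_of, Matrix.mul_fin_two,
    Matrix.trace_fin_two_of]
  ring

lemma coeff_mon_SE7 (s t : ℂ) (c e : ℕ) :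
    coeff (mon 16 0 c e) (SE7 s t) =
      if c = 0 ∧ e = 0 then 9 * s ^ 17 * (2 * t - 5) * (11 * t ^ 2 - 66 * t + 97) else 0 := by
  split_ifs with h
  · obtain ⟨rfl, rfl⟩ := h
    have hinj : Function.Injective fun k : ℕ => k • weightE7 0 :=
      fun a b hab => by simpa [weightE7] using hab
    rw [← eval_SE7, ← coeff_single_eq_eval_of_isWeightedHomogeneous (n := 16) hinj
      (isWeightedHomogeneous_SE7 s t)]
    simp [mon]
  · refine (isWeightedHomogeneous_SE7 s t).coeff_eq_zero _ ?_
    rw [weight_weightE7_mon]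
    omega

lemma dimNumeratorE7_ne_zero_of_root {R : Type*} [CommRing R] [NeZero (3 : R)] {t : R}
    (ht : t ^ 3 - 21 * t + 37 = 0) : 2 * t ^ 2 + 5 * t - 30 ≠ 0 := by
  have hinv : (2 * t ^ 2 + 5 * t - 30) * (11 - 2 * t - t ^ 2) = 3 := by
    linear_combination (-9 - 2 * t) * ht
  exact left_ne_zero_of_mul (hinv ▸ three_ne_zero)

-- For `s¹⁸ = 26220 t² + 67488 t - 376912` the left side is `s` times the coefficient of `u¹⁶`.
lemma scale_mul_coeffE7_eq_of_root {R : Type*} [CommRing R] {t : R}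
    (ht : t ^ 3 - 21 * t + 37 = 0) :
    9 * (26220 * t ^ 2 + 67488 * t - 376912) * (2 * t - 5) * (11 * t ^ 2 - 66 * t + 97) =
      -36 * (2 * t ^ 2 + 5 * t - 30) := by
  linear_combination (44465400 - 30765636 * t + 5191560 * t ^ 2) * ht

theorem stmt5 (t : ℂ) (ht : t ^ 3 - 21 * t + 37 = 0) :
    2 * t ^ 2 + 5 * t - 30 ≠ 0 ∧
    26220 * t ^ 2 + 67488 * t - 376912 ≠ 0 ∧
    ∀ s : ℂ, s ^ 18 = 26220 * t ^ 2 + 67488 * t - 376912 →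
      s ≠ 0 ∧
      (∀ c' e' : ℕ, coeff (mon 16 0 c' e') (SE7 s t)
          = if c' = 0 ∧ e' = 0 then -36 * (2 * t ^ 2 + 5 * t - 30) / s else 0) ∧
      -(1/36 : ℂ) * coeff (mon 16 0 0 0) (SE7 s t) = (2 * t ^ 2 + 5 * t - 30) / s ∧
      (2 * t ^ 2 + 5 * t - 30) / s ≠ 0 := by
  have hdim := dimNumeratorE7_ne_zero_of_root ht
  have hkey := scale_mul_coeffE7_eq_of_root ht
  have hpow : 26220 * t ^ 2 + 67488 * t - 376912 ≠ 0 := by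
    intro h
    simp [h, hdim] at hkey
  refine ⟨hdim, hpow, fun s hs => ?_⟩
  have hs0 : s ≠ 0 := by
    rintro rfl
    exact hpow (by rw [← hs, zero_pow (by norm_num)])
  have hcoeff : 9 * s ^ 17 * (2 * t - 5) * (11 * t ^ 2 - 66 * t + 97) =
      -36 * (2 * t ^ 2 + 5 * t - 30) / s := by
    rw [eq_div_iff hs0, ← hkey, ← hs]
    ring
  refine ⟨hs0, fun c' e' => by rw [coeff_mon_SE7, hcoeff], ?_, div_ne_zero hdim hs0⟩
  rw [coeff_mon_SE7, if_pos ⟨rfl, rfl⟩, hcoeff]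
  ring
end
end

section
/- Let b ≥ 2 be an integer and f = x^b + x·y² − u^{2b} − v² ∈ R = ℂ[u,v,x,y]. Let (d⁰, d¹) be a pair of 2×2 matrices over R with d¹·d⁰ = f·1 and d⁰·d¹ = f·1, and suppose: (grading) there exist rational numbers α₁, α₂, β₁, β₂ such that for all i, j the (i,j) entry of d¹ is weighted homogeneous of degree 1 + α_j − β_i and the (i,j) entry of d⁰ is weighted homogeneous of degree 1 + β_j − α_i, for the weights w(u) = 1/b, w(v) = 1, w(x) = 2/b, w(y) = 1 − 1/b; (boundary) substituting u = 0 gives d¹|_{u=0} = [[x, v], [v, x^{b−1} + y²]] and d⁰|_{u=0} = [[x^{b−1} + y², −v], [−v, x]]; (non-degeneracy) writing d = [[0, d¹], [d⁰, 0]], the coefficient of u^{2b−2}v⁰ (coefficient extraction in the variables u, v) of str(∂_u d · ∂_v d · ∂_x d · ∂_y d) is non-zero, i.e. the right quantum dimension is non-zero. Then there exist s ∈ ℂ with s^{2b} = 1 and invertible 2×2 matrices P, Q over R such that P·d¹·Q = [[x − s²u², v + s·u·y], [v − s·u·y, (Σ_{i=0}^{b−1} x^i (s·u)^{2(b−1−i)})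 + y²]]; in particular (d⁰, d¹) is isomorphic as a graded matrix factorisation to the factorisation X_u of equation (2.8) of the paper for some choice of s. -/
/-!
The grading and the boundary condition give `d1 0 0 = x + a u² + c u y`, with `c = 0` unless
`b = 2`, and off-diagonal entries `v + r u y + G(u, x)` and `v + r' u y + G'(u, x)`. Comparing
determinants, `det d1 * d0 1 1 = f * d1 0 0`; as `f` does not vanish on the locus `d0 1 1 = 0`, this
forces `d0 1 1 = d1 0 0`, so that `det d1 = f` and `d0` is the adjugate of `d1`. Modulo `d1 0 0` the
polynomials `G`, `G'` become multiples `γ u^b`, `γ' u^b`, and `f` becomes minus the product of the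
off-diagonal entries; comparing coefficients gives `c = 0`, `r' = -r`, `γ' = -γ`, `a = -r²`,
`r γ = 0` and `γ² = r^(2b) - 1`.

The supertrace is the Jacobian determinant of the four entries of `d1`. If `r = 0` it equals
`2y ∂ᵤ(d1 1 0 - d1 0 1)`, which has no term in `u^(2b-2)` for degree reasons. Hence non-degeneracy
gives `r ≠ 0`, so `γ = 0` and `r^(2b) = 1`. One row and one column operation then turn the
off-diagonal entries into `v ± r u y`, and the remaining entry is determined by the determinant.
-/

open MvPolynomial

noncomputable section

/-- A polynomial is weighted homogeneous of degree `q` for the weights `w`. -/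
def WHom (w : Fin 4 → ℚ) (q : ℚ) (p : R4) : Prop :=
  ∀ m ∈ p.support, (∑ i : Fin 4, (m i : ℚ) * w i) = q

/-- The substitution `u ↦ 0` (keeping `v, x, y`). -/
def setU0 : R4 →ₐ[ℂ] R4 := aeval fun i => if i = 0 then 0 else X i

section Matrices

variable {R : Type*} [CommRing R]

lemma det_fin_four (A : Matrix (Fin 4) (Fin 4) R) :
    A.det = A 0 0 * !![A 1 1, A 1 2, A 1 3; A 2 1, A 2 2, A 2 3; A 3 1, A 3 2, A 3 3].det
      - A 0 1 * !![A 1 0, A 1 2, A 1 3; A 2 0, A 2 2, A 2 3; A 3 0, A 3 2, A 3 3].det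
      + A 0 2 * !![A 1 0, A 1 1, A 1 3; A 2 0, A 2 1, A 2 3; A 3 0, A 3 1, A 3 3].det
      - A 0 3 * !![A 1 0, A 1 1, A 1 2; A 2 0, A 2 1, A 2 2; A 3 0, A 3 1, A 3 2].det := by
  simp only [Matrix.det_succ_row_zero (n := 3), Matrix.det_fin_three, Fin.sum_univ_four,
    Matrix.of_apply, Matrix.cons_val, Matrix.submatrix_apply, Fin.succAbove, Fin.reduceSucc,
    Fin.reduceCastSucc, Fin.reduceLT, ↓reduceIte, Fin.coe_ofNat_eq_mod]
  ring

lemma trace_mul_adjugate_sub_trace_adjugate_mul (A : Fin 4 → Matrix (Fin 2) (Fin 2) R) :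
    (A 0 * (A 1).adjugate * A 2 * (A 3).adjugate).trace
      - ((A 0).adjugate * A 1 * (A 2).adjugate * A 3).trace
      = (Matrix.of fun i => ![A i 0 0, A i 1 0, A i 0 1, A i 1 1]).det := by
  simp only [det_fin_four, Matrix.det_fin_three, Matrix.adjugate_fin_two, Matrix.trace_fin_two,
    Matrix.mul_apply, Fin.sum_univ_two, Matrix.of_apply, Matrix.cons_val]
  ring

lemma det_smul_eq_smul_adjugate {n : Type*} [Fintype n] [DecidableEq n] {A B : Matrix n n R} {f : R}
    (h : A * B = f • 1) : A.det • B = f • A.adjugate := by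
  calc A.det • B = A.adjugate * (A * B) := by
        rw [← Matrix.mul_assoc, Matrix.adjugate_mul, Matrix.smul_mul, Matrix.one_mul]
    _ = f • A.adjugate := by rw [h, Matrix.mul_smul, Matrix.mul_one]

lemma dvd_det_add_mul {M : Matrix (Fin 2) (Fin 2) R} {β γ : R} (hβ : M 0 0 ∣ M 0 1 - β)
    (hγ : M 0 0 ∣ M 1 0 - γ) : M 0 0 ∣ M.det + β * γ := by
  have hsplit : M.det + β * γ
      = M 0 0 * M 1 1 - ((M 0 1 - β) * M 1 0 + β * (M 1 0 - γ)) := by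
    rw [Matrix.det_fin_two]
    ring
  rw [hsplit]
  exact dvd_sub (dvd_mul_right _ _) (dvd_add (hβ.mul_right _) (hγ.mul_left _))

lemma exists_isUnit_mul_mul_eq {M N : Matrix (Fin 2) (Fin 2) R}
    (h₀₀ : M 0 0 = N 0 0) (hM : IsLeftRegular (M 0 0)) (h₀₁ : M 0 0 ∣ M 0 1 - N 0 1)
    (h₁₀ : M 0 0 ∣ M 1 0 - N 1 0) (hdet : M.det = N.det) :
    ∃ P Q : Matrix (Fin 2) (Fin 2) R, IsUnit P ∧ IsUnit Q ∧ P * M * Q = N := by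
  obtain ⟨h, hh⟩ := h₀₁
  obtain ⟨k, hk⟩ := h₁₀
  have h₁₁ : M 1 1 - k * M 0 1 - h * M 1 0 + h * k * M 0 0 = N 1 1 := by
    rw [Matrix.det_fin_two, Matrix.det_fin_two, ← h₀₀] at hdet
    refine hM ?_
    linear_combination hdet + N 1 0 * hh + (M 0 1 - M 0 0 * h) * hk
  refine ⟨!![1, 0; -k, 1], !![1, -h; 0, 1], ?_, ?_, ?_⟩
  · simp [Matrix.isUnit_iff_isUnit_det]
  · simp [Matrix.isUnit_iff_isUnit_det]
  · rw [M.eta_fin_two, N.eta_fin_two, Matrix.mul_fin_two, Matrix.mul_fin_two]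
    congrm !![?_, ?_; ?_, ?_]
    · linear_combination h₀₀
    · linear_combination hh
    · linear_combination hk
    · linear_combination h₁₁

end Matrices

section Grading

variable {b : ℕ}

lemma coe_mon (i j k l : ℕ) : ⇑(mon i j k l) = ![i, j, k, l] := by
  ext n
  fin_cases n <;> simp [mon]

lemma monomial_mon (i j k l : ℕ) (a : ℂ) :
    monomial (mon i j k l) a = C a * (u ^ i * v ^ j * x ^ k * y ^ l) := by
  simp only [u, v, x, y, X_pow_eq_monomial, monomial_mul, C_mul_monomial, mon, mul_one]

lemma coeff_setU0 (p : R4) (m : Fin 4 →₀ ℕ) :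
    coeff m (setU0 p) = if m 0 = 0 then coeff m p else 0 := by
  induction p using MvPolynomial.induction_on' with
  | add p q hp hq => rw [map_add, coeff_add, hp, hq, coeff_add]; split_ifs <;> simp
  | monomial s a =>
    have hs : setU0 (monomial s a) = if s 0 = 0 then monomial s a else 0 := by
      split_ifs with h
      · rw [setU0, aeval_monomial, monomial_eq]
        refine congrArg _ (Finsupp.prod_congr fun i hi => ?_)
        rw [if_neg (by rintro rfl; exact Finsupp.mem_support_iff.mp hi h)]
      · obtain ⟨q, hq⟩ : (X 0 : R4) ∣ monomial s a := X_dvd_monomial.mpr (.inr h)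
        simp [hq, setU0]
    rw [hs]
    split_ifs <;> aesop

lemma eq_setU0_add_sum {p : R4} {S : Finset (Fin 4 →₀ ℕ)} (hS : ∀ m ∈ S, m 0 ≠ 0)
    (hp : ∀ m ∈ p.support, m 0 ≠ 0 → m ∈ S) :
    p = setU0 p + ∑ m ∈ S, monomial m (coeff m p) := by
  ext m
  have hsum : coeff m (∑ s ∈ S, monomial s (coeff s p)) = if m ∈ S then coeff m p else 0 := by
    simp [coeff_sum, coeff_monomial]
  rw [coeff_add, coeff_setU0, hsum]
  by_cases h₀ : m 0 = 0
  · rw [if_pos h₀, if_neg (fun h => hS m h h₀), add_zero]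
  by_cases hm : m ∈ S
  · rw [if_neg h₀, if_pos hm, zero_add]
  · rw [if_neg h₀, if_neg hm, add_zero]
    exact notMem_support_iff.mp fun h => hm (hp m h h₀)

/-- The weights of the grading multiplied by `b`, which makes them natural numbers: `u`, `v`, `x`,
`y` have weights `1`, `b`, `2`, `b - 1`. -/
def scaledWeight (b : ℕ) : Fin 4 → ℕ := ![1, b, 2, b - 1]

lemma weight_scaledWeight (b : ℕ) (m : Fin 4 →₀ ℕ) :
    Finsupp.weight (scaledWeight b) m = m 0 + m 1 * b + m 2 * 2 + m 3 * (b - 1) := by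
  simp [Finsupp.weight_apply, Finsupp.sum_fintype, Fin.sum_univ_four, scaledWeight]

lemma isWeightedHomogeneous_of_setU0 (hb : b ≠ 0) {q : ℚ} {p : R4} {n : ℕ}
    (hp : WHom ![1 / (b : ℚ), 1, 2 / (b : ℚ), 1 - 1 / (b : ℚ)] q p)
    (h : IsWeightedHomogeneous (scaledWeight b) (setU0 p) n) (h₀ : setU0 p ≠ 0) :
    IsWeightedHomogeneous (scaledWeight b) p n := by
  have hweight (m : Fin 4 →₀ ℕ) (hm : coeff m p ≠ 0) :
      (Finsupp.weight (scaledWeight b) m : ℚ) = b * q := by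
    have hb' : (b : ℚ) ≠ 0 := Nat.cast_ne_zero.mpr hb
    rw [← hp m (mem_support_iff.mpr hm), weight_scaledWeight, Fin.sum_univ_four]
    push_cast [Nat.one_le_iff_ne_zero.mpr hb]
    field_simp
  obtain ⟨m₀, hm₀⟩ := ne_zero_iff.mp h₀
  have hm₀' : coeff m₀ p ≠ 0 := by
    rw [coeff_setU0] at hm₀
    aesop
  intro m hm
  rw [← h hm₀]
  exact_mod_cast (hweight m hm).trans (hweight m₀ hm₀').symm

lemma eq_mon_of_weight_eq {n : ℕ} (hb : 2 ≤ b) (hn : n ≤ b) {m : Fin 4 →₀ ℕ}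
    (hm : Finsupp.weight (scaledWeight b) m = n) (h₀ : m 0 ≠ 0) :
    m = mon 1 0 0 1 ∨ ∃ k < (n + 1) / 2, m = mon (n - 2 * k) 0 k 0 := by
  rw [weight_scaledWeight] at hm
  have h₁ : m 1 = 0 := by
    by_contra h
    have := Nat.le_mul_of_pos_left b (Nat.pos_of_ne_zero h)
    lia
  have h₃ : m 3 ≤ 1 := by
    by_contra! h
    have := Nat.mul_le_mul_right (b - 1) h
    lia
  have mon_of {i k l : ℕ} (hi : m 0 = i) (hk : m 2 = k) (hl : m 3 = l) : m = mon i 0 k l := by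
    ext j
    fin_cases j <;> simp [coe_mon, h₁, hi, hk, hl]
  interval_cases m 3
  · exact .inr ⟨m 2, by lia, mon_of (by lia) rfl rfl⟩
  · exact .inl (mon_of (by lia) (by lia) rfl)

lemma exists_eq_setU0_add {n : ℕ} (hb : 2 ≤ b) (hn : n ≤ b) {p : R4}
    (hp : IsWeightedHomogeneous (scaledWeight b) p n) :
    ∃ (r : ℂ) (g : ℕ → ℂ), (r = 0 ∨ n = b) ∧
      p = setU0 p + C r * (u * y)
        + ∑ k ∈ Finset.range ((n + 1) / 2), C (g k) * (u ^ (n - 2 * k) * x ^ k) := by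
  let e (k : ℕ) : Fin 4 →₀ ℕ := mon (n - 2 * k) 0 k 0
  let S : Finset (Fin 4 →₀ ℕ) := insert (mon 1 0 0 1) ((Finset.range ((n + 1) / 2)).image e)
  have mem_S (m : Fin 4 →₀ ℕ) : m ∈ S ↔ m = mon 1 0 0 1 ∨ ∃ k < (n + 1) / 2, m = e k := by
    simp [S, eq_comm]
  have hS : ∀ m ∈ S, m 0 ≠ 0 := by
    intro m hm
    obtain rfl | ⟨k, hk, rfl⟩ := (mem_S m).mp hm <;> simp only [e, coe_mon, Matrix.cons_val] <;> lia
  have mem_S_of_mem_support : ∀ m ∈ p.support, m 0 ≠ 0 → m ∈ S := fun m hm h₀ =>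
    (mem_S m).mpr (eq_mon_of_weight_eq hb hn (hp (mem_support_iff.mp hm)) h₀)
  have e_injective : Function.Injective e := fun k l h => by
    simpa [e, coe_mon] using DFunLike.congr_fun h 2
  have uy_notMem : mon 1 0 0 1 ∉ (Finset.range ((n + 1) / 2)).image e := by
    intro h
    obtain ⟨k, -, hk⟩ := Finset.mem_image.mp h
    simpa [e, coe_mon] using DFunLike.congr_fun hk 3
  refine ⟨coeff (mon 1 0 0 1) p, fun k => coeff (e k) p, ?_, ?_⟩
  · by_contra! h
    have := hp h.1
    simp only [weight_scaledWeight, coe_mon, Matrix.cons_val] at this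
    lia
  · have hsum := eq_setU0_add_sum hS mem_S_of_mem_support
    rw [Finset.sum_insert uy_notMem, Finset.sum_image e_injective.injOn] at hsum
    simpa [e, monomial_mon, add_assoc] using hsum

lemma coeff_y_mul_eq_zero {n : ℕ} {p : R4} (hp : IsWeightedHomogeneous (scaledWeight b) p n)
    {m : Fin 4 →₀ ℕ} (hm : n < m 0) : coeff m (y * p) = 0 := by
  rw [y, coeff_X_mul']
  split_ifs
  · apply hp.coeff_eq_zero
    have hu : (m - Finsupp.single 3 1 : Fin 4 →₀ ℕ) 0 = m 0 := by simp
    rw [weight_scaledWeight, hu]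
    lia
  · rfl

end Grading

section Entries

variable {b : ℕ} {a c : ℂ}

/-- The potential `f` that the matrices factorise. -/
def potential (b : ℕ) : R4 := x ^ b + x * y ^ 2 - u ^ (2 * b) - v ^ 2

/-- The general shape of an entry restricting to `x` on `u = 0`; the term `u y` has the right weight
only for `b = 2`. -/
def diagEntry (a c : ℂ) : R4 := x + C a * u ^ 2 + C c * (u * y)

/-- The general shape of an entry restricting to `v` on `u = 0`. Only the values `g k` with
`2 * k < b` matter. -/
def offDiagEntry (b : ℕ) (r : ℂ) (g : ℕ → ℂ) : R4 :=
  v + C r * (u * y) + ∑ k ∈ Finset.range ((b + 1) / 2), C (g k) * (u ^ (b - 2 * k) * x ^ k)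

lemma potential_ne_zero (b : ℕ) : potential b ≠ 0 := by
  intro h
  simpa [potential, u, v, x, y] using congrArg (eval ![1, 0, 1, 1]) h

lemma pderiv_three_potential (b : ℕ) : pderiv 3 (potential b) = x * (2 * y) := by
  simp [potential, u, v, x, y, pderiv_X]

lemma diagEntry_ne_zero (a c : ℂ) : diagEntry a c ≠ 0 := by
  intro h
  simpa [diagEntry, u, x, y] using congrArg (eval ![0, 0, 1, 0]) h

lemma pderiv_one_offDiagEntry (b : ℕ) (r : ℂ) (g : ℕ → ℂ) :
    pderiv 1 (offDiagEntry b r g) = 1 := by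
  simp [offDiagEntry, u, v, x, y, pderiv_X]

lemma pderiv_three_offDiagEntry (b : ℕ) (r : ℂ) (g : ℕ → ℂ) :
    pderiv 3 (offDiagEntry b r g) = C r * u := by
  simp [offDiagEntry, u, v, x, y, pderiv_X]

lemma exists_eq_diagEntry (hb : 2 ≤ b) {q : ℚ} {p : R4}
    (hp : WHom ![1 / (b : ℚ), 1, 2 / (b : ℚ), 1 - 1 / (b : ℚ)] q p) (h₀ : setU0 p = x) :
    ∃ a c : ℂ, (c = 0 ∨ b = 2) ∧ p = diagEntry a c := by
  have hp' : IsWeightedHomogeneous (scaledWeight b) p 2 :=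
    isWeightedHomogeneous_of_setU0 (by lia) hp (h₀ ▸ isWeightedHomogeneous_X ℂ _ 2)
      (h₀ ▸ X_ne_zero 2)
  obtain ⟨c, g, hc, hpc⟩ := exists_eq_setU0_add hb hb hp'
  refine ⟨g 0, c, hc.imp_right Eq.symm, ?_⟩
  simpa [h₀, diagEntry, add_right_comm] using hpc

lemma isWeightedHomogeneous_of_setU0_eq_v (hb : b ≠ 0) {q : ℚ} {p : R4}
    (hp : WHom ![1 / (b : ℚ), 1, 2 / (b : ℚ), 1 - 1 / (b : ℚ)] q p) (h₀ : setU0 p = v) :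
    IsWeightedHomogeneous (scaledWeight b) p b :=
  isWeightedHomogeneous_of_setU0 hb hp (h₀ ▸ isWeightedHomogeneous_X ℂ _ 1) (h₀ ▸ X_ne_zero 1)

lemma exists_eq_offDiagEntry (hb : 2 ≤ b) {p : R4}
    (hp : IsWeightedHomogeneous (scaledWeight b) p b) (h₀ : setU0 p = v) :
    ∃ (r : ℂ) (g : ℕ → ℂ), p = offDiagEntry b r g := by
  obtain ⟨r, g, -, hrg⟩ := exists_eq_setU0_add hb le_rfl hp
  exact ⟨r, g, by rwa [h₀] at hrg⟩

lemma exists_diagEntry_dvd_offDiagEntry_sub (hc : c = 0 ∨ b = 2) (r : ℂ) (g : ℕ → ℂ) :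
    ∃ γ : ℂ, diagEntry a c ∣ offDiagEntry b r g - (v + C r * (u * y) + C γ * u ^ b) := by
  rcases hc with rfl | rfl
  · have hx (k : ℕ) : diagEntry a 0 ∣ x ^ k - (C (-a) * u ^ 2) ^ k := by
      have hd : diagEntry a 0 = x - C (-a) * u ^ 2 := by simp [diagEntry]
      exact hd ▸ sub_dvd_pow_sub_pow _ _ k
    refine ⟨∑ k ∈ Finset.range ((b + 1) / 2), g k * (-a) ^ k, ?_⟩
    rw [offDiagEntry, add_sub_add_left_eq_sub, map_sum, Finset.sum_mul, ← Finset.sum_sub_distrib]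
    refine Finset.dvd_sum fun k hk => ?_
    have hu : u ^ b = u ^ (b - 2 * k) * (u ^ 2) ^ k := by
      rw [← pow_mul, ← pow_add]
      congr
      have := Finset.mem_range.mp hk
      lia
    convert (hx k).mul_left (C (g k) * u ^ (b - 2 * k)) using 1
    rw [hu, map_mul, map_pow]
    ring
  · exact ⟨g 0, by simp [offDiagEntry]⟩

lemma eval_eq_zero_of_diagEntry_dvd {p : R4} (h : diagEntry a c ∣ p) (U V Y : ℂ) :
    eval ![U, V, -(a * U ^ 2 + c * (U * Y)), Y] p = 0 := by
  obtain ⟨q, rfl⟩ := h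
  simp [diagEntry, u, x, y]

lemma diagEntry_eq_of_dvd_potential_mul {a' c' : ℂ}
    (h : diagEntry a' c' ∣ potential b * diagEntry a c) : diagEntry a' c' = diagEntry a c := by
  have hzero (U Y : ℂ) : (a - a') * U ^ 2 + (c - c') * (U * Y) = 0 := by
    have hV (V : ℂ) := eval_eq_zero_of_diagEntry_dvd h U V Y
    simp only [potential, diagEntry, u, v, x, y, map_mul, map_add, map_sub, map_pow, eval_X, eval_C,
      Matrix.cons_val] at hV
    linear_combination hV 0 - hV 1
  have ha : a' = a := by linear_combination -hzero 1 0
  have hc : c' = c := by linear_combination hzero 1 0 - hzero 1 1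
  rw [ha, hc]

lemma coefficients_of_diagEntry_dvd {r r' γ γ' : ℂ} (hc : c = 0 ∨ b = 2)
    (h : diagEntry a c ∣ potential b
      + (v + C r * (u * y) + C γ * u ^ b) * (v + C r' * (u * y) + C γ' * u ^ b)) :
    c = 0 ∧ r' = -r ∧ γ' = -γ ∧ a = -r ^ 2 ∧ r * γ = 0 ∧ γ ^ 2 = r ^ (2 * b) - 1 := by
  have heval (V Y : ℂ) : (-(a + c * Y)) ^ b - (a + c * Y) * Y ^ 2 - 1 - V ^ 2
      + (V + r * Y + γ) * (V + r' * Y + γ') = 0 := by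
    have := eval_eq_zero_of_diagEntry_dvd h 1 V Y
    simp only [potential, u, v, x, y, map_mul, map_add, map_sub, map_pow, eval_X, eval_C,
      Matrix.cons_val, one_pow, one_mul, mul_one] at this
    linear_combination this
  have hlinear (Y : ℂ) : (r + r') * Y + (γ + γ') = 0 := by
    linear_combination heval 1 Y - heval 0 Y
  obtain rfl : γ' = -γ := by linear_combination hlinear 0
  obtain rfl : r' = -r := by linear_combination hlinear 1 - hlinear 0
  have hsq (Y : ℂ) : (r * Y + γ) ^ 2 = (-(a + c * Y)) ^ b - 1 - (a + c * Y) * Y ^ 2 := by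
    linear_combination -heval 0 Y
  obtain rfl : c = 0 := by
    rcases hc with hc | rfl
    · exact hc
    · -- The third finite difference at `-1, 0, 1, 2` isolates the cubic coefficient `-c`.
      linear_combination (1 / 6) * (hsq 2 - 3 * hsq 1 + 3 * hsq 0 - hsq (-1))
  simp only [zero_mul, add_zero] at hsq
  obtain rfl : a = -r ^ 2 := by linear_combination (1 / 2) * (hsq 1 + hsq (-1) - 2 * hsq 0)
  have hrγ : r * γ = 0 := by linear_combination (1 / 4) * (hsq 1 - hsq (-1))
  have hγ : γ ^ 2 = r ^ (2 * b) - 1 := by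
    rw [pow_mul]
    simpa using hsq 0
  exact ⟨rfl, rfl, rfl, rfl, hrγ, hγ⟩

end Entries

section Factorisation

variable {b : ℕ} {a c : ℂ}

lemma det_eq_and_eq_adjugate {d0 d1 : Matrix (Fin 2) (Fin 2) R4} {a' c' : ℂ}
    (h : d1 * d0 = potential b • (1 : Matrix (Fin 2) (Fin 2) R4))
    (h₁ : d1 0 0 = diagEntry a c) (h₀ : d0 1 1 = diagEntry a' c') :
    d1.det = potential b ∧ d0 = d1.adjugate := by
  have hadj := det_smul_eq_smul_adjugate h
  have h₁₁ : d1.det * diagEntry a' c' = potential b * diagEntry a c := by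
    simpa [Matrix.adjugate_fin_two, h₁, h₀] using congrFun (congrFun hadj 1) 1
  rw [diagEntry_eq_of_dvd_potential_mul (Dvd.intro_left _ h₁₁)] at h₁₁
  have hdet := mul_right_cancel₀ (diagEntry_ne_zero a c) h₁₁
  rw [hdet] at hadj
  exact ⟨hdet, smul_right_injective _ (potential_ne_zero b) hadj⟩

lemma exists_offDiagEntry_congr {M : Matrix (Fin 2) (Fin 2) R4} {r r' : ℂ} {g g' : ℕ → ℂ}
    (hc : c = 0 ∨ b = 2) (hdet : M.det = potential b) (h₀₀ : M 0 0 = diagEntry a c)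
    (h₀₁ : M 0 1 = offDiagEntry b r g) (h₁₀ : M 1 0 = offDiagEntry b r' g') :
    M 0 0 = x - C r ^ 2 * u ^ 2 ∧ r' = -r ∧ ∃ γ : ℂ, r * γ = 0 ∧ γ ^ 2 = r ^ (2 * b) - 1 ∧
      M 0 0 ∣ M 0 1 - (v + C r * (u * y) + C γ * u ^ b) ∧
      M 0 0 ∣ M 1 0 - (v - C r * (u * y) - C γ * u ^ b) := by
  obtain ⟨γ, hγ⟩ := exists_diagEntry_dvd_offDiagEntry_sub (a := a) hc r g
  obtain ⟨γ', hγ'⟩ := exists_diagEntry_dvd_offDiagEntry_sub (a := a) hc r' g'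
  rw [← h₀₀, ← h₀₁] at hγ
  rw [← h₀₀, ← h₁₀] at hγ'
  have hdvd := dvd_det_add_mul hγ hγ'
  rw [hdet, h₀₀] at hdvd
  obtain ⟨rfl, rfl, rfl, rfl, hrγ, hsq⟩ := coefficients_of_diagEntry_dvd hc hdvd
  refine ⟨?_, rfl, γ, hrγ, hsq, hγ, ?_⟩
  · simp [h₀₀, diagEntry, sub_eq_add_neg]
  · simpa [sub_eq_add_neg] using hγ'

/-- The supertrace of `∂_u d · ∂_v d · ∂_x d · ∂_y d` for the twisted differential `d` of
`(d0, d1)`, whose coefficients at `u^(2b-2)` give the right quantum dimension. -/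
def supertraceDeriv (d0 d1 : Matrix (Fin 2) (Fin 2) R4) : R4 :=
  str (pd 0 (Matrix.fromBlocks 0 d1 d0 0) * pd 1 (Matrix.fromBlocks 0 d1 d0 0)
    * pd 2 (Matrix.fromBlocks 0 d1 d0 0) * pd 3 (Matrix.fromBlocks 0 d1 d0 0))

lemma pd_adjugate (i : Fin 4) (M : Matrix (Fin 2) (Fin 2) R4) :
    pd i M.adjugate = (pd i M).adjugate := by
  ext k l
  fin_cases k <;> fin_cases l <;> simp [pd, Matrix.adjugate_fin_two]

lemma supertraceDeriv_adjugate (M : Matrix (Fin 2) (Fin 2) R4) :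
    supertraceDeriv M.adjugate M = (Matrix.of fun i =>
      ![pderiv i (M 0 0), pderiv i (M 1 0), pderiv i (M 0 1), pderiv i (M 1 1)]).det := by
  have hpd (i : Fin 4) : pd i (Matrix.fromBlocks 0 M M.adjugate 0)
      = Matrix.fromBlocks 0 (pd i M) (pd i M).adjugate 0 := by
    rw [← pd_adjugate]
    simp [pd, Matrix.fromBlocks_map]
  simp only [supertraceDeriv, hpd, Matrix.fromBlocks_multiply, str]
  simpa [pd] using trace_mul_adjugate_sub_trace_adjugate_mul fun i => pd i M

lemma supertraceDeriv_adjugate_of_apply_zero_zero_eq_x {M : Matrix (Fin 2) (Fin 2) R4}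
    (hdet : M.det = potential b) (h₀₀ : M 0 0 = x)
    (hv : pderiv 1 (M 0 1) = 1) (hv' : pderiv 1 (M 1 0) = 1)
    (hy : pderiv 3 (M 0 1) = 0) (hy' : pderiv 3 (M 1 0) = 0) :
    supertraceDeriv M.adjugate M = 2 * (y * pderiv 0 (M 1 0 - M 0 1)) := by
  have hx {i : Fin 4} (hi : 2 ≠ i) : pderiv i x = 0 := pderiv_X_of_ne hi
  have hx' : pderiv 2 x = 1 := pderiv_X_self 2
  have h₁₁ : pderiv 3 (M 1 1) = 2 * y := by
    apply mul_left_cancel₀ (show x ≠ 0 from X_ne_zero 2)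
    rw [← pderiv_three_potential b, ← hdet, Matrix.det_fin_two, h₀₀]
    simp [hx, hy, hy']
  rw [supertraceDeriv_adjugate, det_fin_four]
  simp only [Matrix.det_fin_three, Matrix.of_apply, Matrix.cons_val, h₀₀, hv, hv', hy, hy', h₁₁,
    hx (i := 0) (by decide), hx (i := 1) (by decide), hx (i := 3) (by decide), hx', map_sub]
  ring

lemma coeff_supertraceDeriv_eq_zero (hb : 2 ≤ b) {M : Matrix (Fin 2) (Fin 2) R4}
    (hdet : M.det = potential b) (h₀₀ : M 0 0 = x)
    (h₀₁ : IsWeightedHomogeneous (scaledWeight b) (M 0 1) b)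
    (h₁₀ : IsWeightedHomogeneous (scaledWeight b) (M 1 0) b)
    (hv : pderiv 1 (M 0 1) = 1) (hv' : pderiv 1 (M 1 0) = 1)
    (hy : pderiv 3 (M 0 1) = 0) (hy' : pderiv 3 (M 1 0) = 0) (k l : ℕ) :
    coeff (mon (2 * b - 2) 0 k l) (supertraceDeriv M.adjugate M) = 0 := by
  have hhom : IsWeightedHomogeneous (scaledWeight b) (pderiv 0 (M 1 0 - M 0 1)) (b - 1) :=
    (h₁₀.sub h₀₁).pderiv (show b - 1 + 1 = b by lia)
  have hu : b - 1 < mon (2 * b - 2) 0 k l 0 := by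
    simp only [coe_mon, Matrix.cons_val]
    lia
  rw [supertraceDeriv_adjugate_of_apply_zero_zero_eq_x hdet h₀₀ hv hv' hy hy',
    two_mul (y * _), coeff_add, coeff_y_mul_eq_zero hhom hu, add_zero]

/-- The factor `d¹` of the matrix factorisation `X_u` of equation (2.8) of the paper. -/
def modelFactor (b : ℕ) (s : ℂ) : Matrix (Fin 2) (Fin 2) R4 :=
  !![x - C s ^ 2 * u ^ 2, v + C s * u * y;
    v - C s * u * y,
    (∑ i ∈ Finset.range b, x ^ i * (C s * u) ^ (2 * (b - 1 - i))) + y ^ 2]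

lemma det_modelFactor {s : ℂ} (hs : s ^ (2 * b) = 1) : (modelFactor b s).det = potential b := by
  have hgeom := geom_sum₂_mul x ((C s * u) ^ 2) b
  simp only [← pow_mul] at hgeom
  have hpow : (C s * u) ^ (2 * b) = u ^ (2 * b) := by
    rw [mul_pow, ← map_pow, hs, map_one, one_mul]
  rw [modelFactor, Matrix.det_fin_two_of, potential]
  linear_combination hgeom - hpow

end Factorisation


theorem stmt9 (b : ℕ) (hb : 2 ≤ b) (d0 d1 : Matrix (Fin 2) (Fin 2) R4)
    (hmf1 : d1 * d0
      = (x ^ b + x * y ^ 2 - u ^ (2 * b) - v ^ 2) • (1 : Matrix (Fin 2) (Fin 2) R4))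
    (hmf2 : d0 * d1
      = (x ^ b + x * y ^ 2 - u ^ (2 * b) - v ^ 2) • (1 : Matrix (Fin 2) (Fin 2) R4))
    (hgr : ∃ α β : Fin 2 → ℚ, ∀ i j,
        WHom ![1 / (b : ℚ), 1, 2 / (b : ℚ), 1 - 1 / (b : ℚ)] (1 + α j - β i) (d1 i j) ∧
        WHom ![1 / (b : ℚ), 1, 2 / (b : ℚ), 1 - 1 / (b : ℚ)] (1 + β j - α i) (d0 i j))
    (hbd1 : d1.map setU0 = !![x, v; v, x ^ (b - 1) + y ^ 2])
    (hbd0 : d0.map setU0 = !![x ^ (b - 1) + y ^ 2, -v; -v, x])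
    (hnd : ∃ c e : ℕ, coeff (mon (2 * b - 2) 0 c e)
        (str (pd 0 (Matrix.fromBlocks 0 d1 d0 0) * pd 1 (Matrix.fromBlocks 0 d1 d0 0)
          * pd 2 (Matrix.fromBlocks 0 d1 d0 0) * pd 3 (Matrix.fromBlocks 0 d1 d0 0))) ≠ 0) :
    ∃ s : ℂ, s ^ (2 * b) = 1 ∧
      ∃ P Q : Matrix (Fin 2) (Fin 2) R4, IsUnit P ∧ IsUnit Q ∧
        P * d1 * Q = !![x - C s ^ 2 * u ^ 2, v + C s * u * y;
          v - C s * u * y,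
          (∑ i ∈ Finset.range b, x ^ i * (C s * u) ^ (2 * (b - 1 - i))) + y ^ 2] := by
  obtain ⟨α, β, hgr⟩ := hgr
  have hbd (i j : Fin 2) := congrFun (congrFun hbd1 i) j
  have h01 := isWeightedHomogeneous_of_setU0_eq_v (by lia) (hgr 0 1).1 (by simpa using hbd 0 1)
  have h10 := isWeightedHomogeneous_of_setU0_eq_v (by lia) (hgr 1 0).1 (by simpa using hbd 1 0)
  obtain ⟨a, c, hc, hd1⟩ := exists_eq_diagEntry hb (hgr 0 0).1 (by simpa using hbd 0 0)
  obtain ⟨a', c', -, hd0⟩ := exists_eq_diagEntry hb (hgr 1 1).2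
    (by simpa using congrFun (congrFun hbd0 1) 1)
  obtain ⟨r, g, hr⟩ := exists_eq_offDiagEntry hb h01 (by simpa using hbd 0 1)
  obtain ⟨r', g', hr'⟩ := exists_eq_offDiagEntry hb h10 (by simpa using hbd 1 0)
  obtain ⟨hdet, rfl⟩ := det_eq_and_eq_adjugate hmf1 hd1 hd0
  obtain ⟨h00, rfl, γ, hrγ, hsq, hβ, hγ⟩ := exists_offDiagEntry_congr hc hdet hd1 hr hr'
  have hr0 : r ≠ 0 := by
    rintro rfl
    obtain ⟨k, l, hnd⟩ := hnd
    refine hnd (coeff_supertraceDeriv_eq_zero hb hdet ?_ h01 h10 ?_ ?_ ?_ ?_ k l) <;>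
      simp [h00, hr, hr', pderiv_one_offDiagEntry, pderiv_three_offDiagEntry]
  obtain rfl : γ = 0 := (mul_eq_zero.mp hrγ).resolve_left hr0
  have hr1 : r ^ (2 * b) = 1 := by linear_combination -hsq
  refine ⟨r, hr1, exists_isUnit_mul_mul_eq (N := modelFactor b r) h00
    (IsRegular.of_ne_zero (hd1 ▸ diagEntry_ne_zero a c)).left ?_ ?_
    (hdet.trans (det_modelFactor hr1).symm)⟩
  · simpa [modelFactor, mul_assoc] using hβ
  · simpa [modelFactor, mul_assoc] using hγ
end
end
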